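/- arXiv:cs/0510029 — 3 statements merged into one kernel-verified Lean document; each statement's English description precedes it below -/
import Mathlib

section
/- Let N_ij (1 ≤ i ≤ p, 1 ≤ j ≤ q) be a family of m×n matrices with nonnegative real entries such that: (a) for every i the sum Σ_j N_ij has rank 1 and for every j the sum Σ_i N_ij has rank 1; (b) the p×q matrix P with entries p_ij = S(N_ij) is a good joint probability matrix, where S(N_ij) denotes the sum of all entries of N_ij. Then the m×n matrix Σ_{i,j} N_ij is a good joint probability matrix. -/
open scoped BigOperators Classical

noncomputable section

/-- Probability of an event `E` under a distribution `μ` on a finite sample space `Ω`. -/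
def pr {Ω : Type} [Fintype Ω] (μ : Ω → ℝ) (E : Ω → Prop) : ℝ :=
  ∑ ω, if E ω then μ ω else 0

/-- `μ` is a probability distribution on the finite space `Ω`. -/
def IsProb {Ω : Type} [Fintype Ω] (μ : Ω → ℝ) : Prop :=
  (∀ ω, 0 ≤ μ ω) ∧ ∑ ω, μ ω = 1

/-- Shannon entropy (base 2) of a random variable `α` on a finite probability space. -/
def ent {Ω A : Type} [Fintype Ω] (μ : Ω → ℝ) (α : Ω → A) : ℝ :=
  -∑ a ∈ Finset.univ.image α,
      pr μ (fun ω => α ω = a) * Real.logb 2 (pr μ (fun ω => α ω = a))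

/-- Conditional entropy `H(α | β)`. -/
def condEnt {Ω A B : Type} [Fintype Ω] (μ : Ω → ℝ) (α : Ω → A) (β : Ω → B) : ℝ :=
  ent μ (fun ω => (α ω, β ω)) - ent μ β

/-- Mutual information `I(α : β)`. -/
def mutualInfo {Ω A B : Type} [Fintype Ω] (μ : Ω → ℝ) (α : Ω → A) (β : Ω → B) : ℝ :=
  ent μ α + ent μ β - ent μ (fun ω => (α ω, β ω))

/-- Conditional mutual information `I(α : β | γ)`. -/
def condMutualInfo {Ω A B C : Type} [Fintype Ω] (μ : Ω → ℝ)
    (α : Ω → A) (β : Ω → B) (γ : Ω → C) : ℝ :=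
  condEnt μ α γ + condEnt μ β γ - condEnt μ (fun ω => (α ω, β ω)) γ

/-- Independence of two random variables. -/
def Indep {Ω A B : Type} [Fintype Ω] (μ : Ω → ℝ) (α : Ω → A) (β : Ω → B) : Prop :=
  ∀ (a : A) (b : B),
    pr μ (fun ω => α ω = a ∧ β ω = b) =
      pr μ (fun ω => α ω = a) * pr μ (fun ω => β ω = b)

/-- Auxiliary form of "conditionally independent of order `k`" (explicit `Fintype`):
`α` and `β` are conditionally independent of order `0` if they are independent,
and of order `k + 1` if on some finite probability space there are random variables
`α₀, β₀, α*, β*` such that `(α₀, β₀)` has the same joint distribution as `(α, β)`,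
`I(α₀ : β₀ | α*) = 0`, `I(α₀ : β₀ | β*) = 0`, and `α*, β*` are conditionally
independent of order `k`. -/
def CondIndepOrderAux : ℕ → (Ω A B : Type) → Fintype Ω → (Ω → ℝ) → (Ω → A) → (Ω → B) → Prop
  | 0, _Ω, _A, _B, iΩ, μ, α, β => @Indep _ _ _ iΩ μ α β
  | k+1, _Ω, A, B, iΩ, μ, α, β =>
      ∃ (Ω' A' B' : Type) (iΩ' : Fintype Ω') (μ' : Ω' → ℝ)
        (α₀ : Ω' → A) (β₀ : Ω' → B) (αs : Ω' → A') (βs : Ω' → B'),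
        @IsProb _ iΩ' μ' ∧
        (∀ (a : A) (b : B),
          @pr _ iΩ' μ' (fun ω => α₀ ω = a ∧ β₀ ω = b) =
            @pr _ iΩ μ (fun ω => α ω = a ∧ β ω = b)) ∧
        @condMutualInfo _ _ _ _ iΩ' μ' α₀ β₀ αs = 0 ∧
        @condMutualInfo _ _ _ _ iΩ' μ' α₀ β₀ βs = 0 ∧
        CondIndepOrderAux k Ω' A' B' iΩ' μ' αs βs

/-- Random variables `α` and `β` on a finite probability space are
conditionally independent of order `k`. -/
def CondIndepOrder {Ω A B : Type} [iΩ : Fintype Ω]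
    (μ : Ω → ℝ) (α : Ω → A) (β : Ω → B) (k : ℕ) : Prop :=
  CondIndepOrderAux k Ω A B iΩ μ α β

/-- An `m × n` joint probability matrix: nonnegative entries summing to `1`. -/
def IsJointProbMatrix {m n : ℕ} (M : Matrix (Fin m) (Fin n) ℝ) : Prop :=
  (∀ i j, 0 ≤ M i j) ∧ ∑ i, ∑ j, M i j = 1

/-- `M` is the joint probability matrix of the pair `(α, β)`. -/
def IsJointMatrixOf {Ω : Type} [Fintype Ω] {m n : ℕ} (M : Matrix (Fin m) (Fin n) ℝ)
    (μ : Ω → ℝ) (α : Ω → Fin m) (β : Ω → Fin n) : Prop :=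
  ∀ i j, M i j = pr μ (fun ω => α ω = i ∧ β ω = j)

/-- `M` is a block matrix: rows and columns can be partitioned into two nonempty
parts so that the two diagonal blocks each contain a nonzero element and all
entries outside the diagonal blocks vanish. -/
def IsBlockMatrix {m n : ℕ} (M : Matrix (Fin m) (Fin n) ℝ) : Prop :=
  ∃ (I₁ : Finset (Fin m)) (J₁ : Finset (Fin n)),
    I₁.Nonempty ∧ I₁ᶜ.Nonempty ∧ J₁.Nonempty ∧ J₁ᶜ.Nonempty ∧
    (∃ i ∈ I₁, ∃ j ∈ J₁, M i j ≠ 0) ∧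
    (∃ i ∈ I₁ᶜ, ∃ j ∈ J₁ᶜ, M i j ≠ 0) ∧
    (∀ i j, ((i ∈ I₁ ∧ j ∈ J₁ᶜ) ∨ (i ∈ I₁ᶜ ∧ j ∈ J₁)) → M i j = 0)

/-- `M` is a good matrix: the joint probability matrix of some pair of
conditionally independent random variables (of some finite order). -/
def IsGoodMatrix {m n : ℕ} (M : Matrix (Fin m) (Fin n) ℝ) : Prop :=
  ∃ (Ω : Type) (iΩ : Fintype Ω) (μ : Ω → ℝ) (α : Ω → Fin m) (β : Ω → Fin n) (k : ℕ),
    @IsProb _ iΩ μ ∧ @IsJointMatrixOf _ iΩ _ _ M μ α β ∧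
    @CondIndepOrder _ _ _ iΩ μ α β k

/-- A stochastic matrix: nonnegative entries, all row sums equal to `1`. -/
def IsStochastic {m n : ℕ} (A : Matrix (Fin m) (Fin n) ℝ) : Prop :=
  (∀ i j, 0 ≤ A i j) ∧ ∀ i, ∑ j, A i j = 1

/-- The matrix `D_ε`: diagonal entries `1/2 - ε`, off-diagonal entries `ε`. -/
def Dmat (ε : ℝ) : Matrix (Fin 2) (Fin 2) ℝ :=
  fun i j => if i = j then 1/2 - ε else ε

/-- The distribution of `n` i.i.d. trials, each distributed according to `μ`. -/
def iidMeasure {Ω : Type} [Fintype Ω] (μ : Ω → ℝ) (n : ℕ) : (Fin n → Ω) → ℝ :=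
  fun ωv => ∏ i, μ (ωv i)

/-- The sequence of `n` coordinatewise copies of a random variable. -/
def iidRV {Ω A : Type} (α : Ω → A) (n : ℕ) : (Fin n → Ω) → (Fin n → A) :=
  fun ωv i => α (ωv i)

/-- `(u, v, w)` belongs to the rate region of the pair `(α, β)`. -/
def InRateRegion {Ω A B : Type} [Fintype Ω] (μ : Ω → ℝ) (α : Ω → A) (β : Ω → B)
    (u v w : ℝ) : Prop :=
  0 ≤ u ∧ 0 ≤ v ∧ 0 ≤ w ∧
  ∀ ε > (0:ℝ), ∀ δ > (0:ℝ), ∃ n₀ : ℕ, ∀ n ≥ n₀,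
    ∃ (t : (Fin n → A) × (Fin n → B) → (Fin ⌊(u + δ) * n⌋₊ → Bool))
      (f : (Fin n → A) × (Fin n → B) → (Fin ⌊(v + δ) * n⌋₊ → Bool))
      (g : (Fin n → A) × (Fin n → B) → (Fin ⌊(w + δ) * n⌋₊ → Bool))
      (r : (Fin ⌊(u + δ) * n⌋₊ → Bool) × (Fin ⌊(v + δ) * n⌋₊ → Bool) → (Fin n → A))
      (s : (Fin ⌊(u + δ) * n⌋₊ → Bool) × (Fin ⌊(w + δ) * n⌋₊ → Bool) → (Fin n → B)),
      pr (iidMeasure μ n) (fun ωv =>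
          r (t (iidRV α n ωv, iidRV β n ωv), f (iidRV α n ωv, iidRV β n ωv)) = iidRV α n ωv)
        > 1 - ε ∧
      pr (iidMeasure μ n) (fun ωv =>
          s (t (iidRV α n ωv, iidRV β n ωv), g (iidRV α n ωv, iidRV β n ωv)) = iidRV β n ωv)
        > 1 - ε

/-- The support of a matrix: the set of positions of its nonzero entries. -/
def msupport {m n : ℕ} (M : Matrix (Fin m) (Fin n) ℝ) : Set (Fin m × Fin n) :=
  {p | M p.1 p.2 ≠ 0}

/-- An r-matrix: nonnegative entries and rectangular support. -/
def IsRMatrix {m n : ℕ} (M : Matrix (Fin m) (Fin n) ℝ) : Prop :=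
  (∀ i j, 0 ≤ M i j) ∧ ∃ (A : Set (Fin m)) (B : Set (Fin n)), msupport M = A ×ˢ B

/-- An r-decomposition of `M`: an expression of `M` as a finite sum of r-matrices
such that the supports of consecutive summands intersect. -/
def IsRDecomposition {m n : ℕ} (M : Matrix (Fin m) (Fin n) ℝ)
    (l : ℕ) (Ms : Fin l → Matrix (Fin m) (Fin n) ℝ) : Prop :=
  M = ∑ i, Ms i ∧ (∀ i, IsRMatrix (Ms i)) ∧
  ∀ (i : ℕ) (h : i + 1 < l),
    (msupport (Ms ⟨i, Nat.lt_of_succ_lt h⟩) ∩ msupport (Ms ⟨i + 1, h⟩)).Nonempty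

end

/-!
Pick a block `(i, j)` and a position `(a, b)` with probability `N i j a b`. Given `i`, the position
has joint table `∑ j, N i j` up to scaling; a nonnegative table of rank at most one is a product
distribution, so the two coordinates of the position are independent given `i`, and likewise given
`j`. The position has joint matrix `∑ i, ∑ j, N i j` and the block label has the good joint matrix
`P`, so the position is conditionally independent of one order more than the label.
-/

section RankOne

variable {R C K : Type*} [Fintype C] [Field K]

lemma exists_eq_vecMulVec_of_rank_le_one {M : Matrix R C K} (hM : M.rank ≤ 1) :
    ∃ (u : R → K) (v : C → K), M = Matrix.vecMulVec u v := by
  obtain ⟨u, hu⟩ := finrank_le_one_iff.1 hM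
  have col_eq_smul (c : C) : ∃ k : K, M.col c = k • u.1 := by
    obtain ⟨k, hk⟩ := hu ⟨M.mulVecLin (Pi.single c 1), LinearMap.mem_range_self _ _⟩
    exact ⟨k, by simpa using (congrArg Subtype.val hk).symm⟩
  choose v hv using col_eq_smul
  refine ⟨u.1, v, Matrix.ext fun r c => ?_⟩
  simpa [Matrix.vecMulVec_apply, mul_comm] using congrFun (hv c) r

lemma mul_sum_eq_sum_mul_sum_of_rank_le_one [Fintype R] {M : Matrix R C K} (hM : M.rank ≤ 1)
    (r : R) (c : C) :
    M r c * ∑ r', ∑ c', M r' c' = (∑ c', M r c') * ∑ r', M r' c := by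
  obtain ⟨u, v, rfl⟩ := exists_eq_vecMulVec_of_rank_le_one hM
  simp only [Matrix.vecMulVec_apply, ← Finset.mul_sum, ← Finset.sum_mul]
  ring

end RankOne

section TableMutualInfo

/-- The function `x ↦ x log₂ x`, whose value at `0` is `0`; entropies are its negated sums. -/
noncomputable def mulLog2 (x : ℝ) : ℝ :=
  x * Real.logb 2 x

lemma mulLog2_eq_of_mul_eq_mul {t s r c : ℝ} (hs : t ≠ 0 → s ≠ 0) (h : t * s = r * c) :
    mulLog2 t = t * Real.logb 2 r + t * Real.logb 2 c - t * Real.logb 2 s := by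
  rcases eq_or_ne t 0 with rfl | ht
  · simp [mulLog2]
  have hrc : r * c ≠ 0 := h ▸ mul_ne_zero ht (hs ht)
  have hlog : Real.logb 2 t + Real.logb 2 s = Real.logb 2 r + Real.logb 2 c := by
    rw [← Real.logb_mul ht (hs ht), h,
      Real.logb_mul (left_ne_zero_of_mul hrc) (right_ne_zero_of_mul hrc)]
  rw [mulLog2, ← mul_add, ← hlog]
  ring

variable {A B : Type*} [Fintype A] [Fintype B]

/-- Mutual information between the row and the column of a table of weights. The weights need not
sum to `1`, so that the conditional mutual information is the sum of this quantity over the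
unnormalized conditional distributions. -/
noncomputable def tableMutualInfo (T : Matrix A B ℝ) : ℝ :=
  ∑ a, ∑ b, mulLog2 (T a b) + mulLog2 (∑ a, ∑ b, T a b) -
    ∑ a, mulLog2 (∑ b, T a b) - ∑ b, mulLog2 (∑ a, T a b)

lemma tableMutualInfo_eq_zero_of_rank_le_one {T : Matrix A B ℝ} (hT : ∀ a b, 0 ≤ T a b)
    (hrank : T.rank ≤ 1) : tableMutualInfo T = 0 := by
  have entry_le_total (a : A) (b : B) : T a b ≤ ∑ a, ∑ b, T a b :=
    calc T a b ≤ ∑ b, T a b :=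
          Finset.single_le_sum (fun b _ => hT a b) (Finset.mem_univ b)
      _ ≤ ∑ a, ∑ b, T a b :=
          Finset.single_le_sum (f := fun a => ∑ b, T a b)
            (fun a _ => Finset.sum_nonneg fun b _ => hT a b) (Finset.mem_univ a)
  have mulLog2_entry (a : A) (b : B) :
      mulLog2 (T a b) = T a b * Real.logb 2 (∑ b, T a b) + T a b * Real.logb 2 (∑ a, T a b) -
        T a b * Real.logb 2 (∑ a, ∑ b, T a b) :=
    mulLog2_eq_of_mul_eq_mul
      (fun h0 => (((hT a b).lt_of_ne' h0).trans_le (entry_le_total a b)).ne')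
      (mul_sum_eq_sum_mul_sum_of_rank_le_one hrank a b)
  have sum_col_term : ∑ a, ∑ b, T a b * Real.logb 2 (∑ a, T a b) = ∑ b, mulLog2 (∑ a, T a b) := by
    rw [Finset.sum_comm]
    simp only [mulLog2, ← Finset.sum_mul]
  simp only [tableMutualInfo, mulLog2_entry, Finset.sum_sub_distrib, Finset.sum_add_distrib,
    sum_col_term]
  simp only [mulLog2, ← Finset.sum_mul]
  ring

end TableMutualInfo

section FiniteProbability

variable {Ω A B C : Type} [Fintype Ω] {μ : Ω → ℝ}

lemma pr_nonneg (hμ : ∀ ω, 0 ≤ μ ω) (E : Ω → Prop) : 0 ≤ pr μ E :=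
  Finset.sum_nonneg fun ω _ => by split_ifs <;> simp [hμ ω]

lemma pr_eq_zero_of_forall_not {E : Ω → Prop} (hE : ∀ ω, ¬E ω) : pr μ E = 0 :=
  Finset.sum_eq_zero fun ω _ => if_neg (hE ω)

lemma sum_pr_and_eq [Fintype B] (μ : Ω → ℝ) (E : Ω → Prop) (β : Ω → B) :
    ∑ b, pr μ (fun ω => E ω ∧ β ω = b) = pr μ E := by
  simp only [pr]
  rw [Finset.sum_comm]
  refine Finset.sum_congr rfl fun ω _ => ?_
  by_cases hω : E ω <;> simp [hω]

lemma sum_pr_eq [Fintype A] (μ : Ω → ℝ) (α : Ω → A) :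
    ∑ a, pr μ (fun ω => α ω = a) = ∑ ω, μ ω := by
  simpa [pr] using sum_pr_and_eq μ (fun _ => True) α

lemma IsJointMatrixOf.sum_eq {m n : ℕ} {M : Matrix (Fin m) (Fin n) ℝ} {α : Ω → Fin m}
    {β : Ω → Fin n} (hM : IsJointMatrixOf M μ α β) : ∑ i, ∑ j, M i j = ∑ ω, μ ω := by
  simp only [hM _ _, sum_pr_and_eq, sum_pr_eq]

lemma ent_eq_neg_sum_mulLog2 [Fintype A] (μ : Ω → ℝ) (α : Ω → A) :
    ent μ α = -∑ a, mulLog2 (pr μ fun ω => α ω = a) := by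
  refine congrArg Neg.neg (Finset.sum_subset (Finset.subset_univ _) fun a _ ha => ?_)
  have hpr : pr μ (fun ω => α ω = a) = 0 :=
    pr_eq_zero_of_forall_not fun ω hω => ha (Finset.mem_image.2 ⟨ω, Finset.mem_univ ω, hω⟩)
  simp [hpr]

/-- The joint table of `α` and `β` on the event `γ = c`, not divided by the probability of that
event. -/
noncomputable def sliceMatrix (μ : Ω → ℝ) (α : Ω → A) (β : Ω → B) (γ : Ω → C) (c : C) :
    Matrix A B ℝ :=
  Matrix.of fun a b => pr μ fun ω => (α ω = a ∧ β ω = b) ∧ γ ω = c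

variable (μ) (α : Ω → A) (β : Ω → B) (γ : Ω → C)

lemma sum_sliceMatrix_right [Fintype B] (c : C) (a : A) :
    ∑ b, sliceMatrix μ α β γ c a b = pr μ fun ω => α ω = a ∧ γ ω = c := by
  rw [← sum_pr_and_eq μ _ β]
  simp only [sliceMatrix, Matrix.of_apply, and_right_comm]

lemma sum_sliceMatrix_left [Fintype A] (c : C) (b : B) :
    ∑ a, sliceMatrix μ α β γ c a b = pr μ fun ω => β ω = b ∧ γ ω = c := by
  rw [← sum_pr_and_eq μ _ α]
  simp only [sliceMatrix, Matrix.of_apply, and_assoc, and_comm (a := α _ = _)]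

lemma sum_sum_sliceMatrix [Fintype A] [Fintype B] (c : C) :
    ∑ a, ∑ b, sliceMatrix μ α β γ c a b = pr μ fun ω => γ ω = c := by
  simp only [sum_sliceMatrix_right, and_comm (a := α _ = _), sum_pr_and_eq]

lemma condMutualInfo_eq_sum_tableMutualInfo [Fintype A] [Fintype B] [Fintype C] :
    condMutualInfo μ α β γ = ∑ c, tableMutualInfo (sliceMatrix μ α β γ c) := by
  have ent_triple : ent μ (fun ω => ((α ω, β ω), γ ω)) =
      -∑ c, ∑ a, ∑ b, mulLog2 (sliceMatrix μ α β γ c a b) := by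
    simp only [ent_eq_neg_sum_mulLog2, Fintype.sum_prod_type_right (α₂ := C),
      Fintype.sum_prod_type, Prod.mk.injEq, sliceMatrix, Matrix.of_apply]
  have ent_pair_left : ent μ (fun ω => (α ω, γ ω)) =
      -∑ c, ∑ a, mulLog2 (∑ b, sliceMatrix μ α β γ c a b) := by
    simp only [ent_eq_neg_sum_mulLog2, Fintype.sum_prod_type_right, Prod.mk.injEq,
      sum_sliceMatrix_right]
  have ent_pair_right : ent μ (fun ω => (β ω, γ ω)) =
      -∑ c, ∑ b, mulLog2 (∑ a, sliceMatrix μ α β γ c a b) := by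
    simp only [ent_eq_neg_sum_mulLog2, Fintype.sum_prod_type_right, Prod.mk.injEq,
      sum_sliceMatrix_left]
  have ent_condition : ent μ γ = -∑ c, mulLog2 (∑ a, ∑ b, sliceMatrix μ α β γ c a b) := by
    simp only [ent_eq_neg_sum_mulLog2, sum_sum_sliceMatrix]
  simp only [condMutualInfo, condEnt, tableMutualInfo, Finset.sum_sub_distrib,
    Finset.sum_add_distrib, ent_triple, ent_pair_left, ent_pair_right, ent_condition]
  ring

variable {μ α β γ}

lemma condMutualInfo_eq_zero_of_rank_le_one [Finite A] [Fintype B] [Finite C]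
    (hμ : ∀ ω, 0 ≤ μ ω) (hrank : ∀ c, (sliceMatrix μ α β γ c).rank ≤ 1) :
    condMutualInfo μ α β γ = 0 := by
  have := Fintype.ofFinite A
  have := Fintype.ofFinite C
  rw [condMutualInfo_eq_sum_tableMutualInfo]
  exact Finset.sum_eq_zero fun c _ =>
    tableMutualInfo_eq_zero_of_rank_le_one (fun _ _ => pr_nonneg hμ _) (hrank c)

end FiniteProbability

section CondIndep

variable {Ω Ω' : Type} [Fintype Ω] [Fintype Ω'] {μ : Ω → ℝ} {μ' : Ω' → ℝ}

variable {A B : Type} [Finite A] [Finite B] {α : Ω → A} {β : Ω → B} {α' : Ω' → A} {β' : Ω' → B}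

lemma Indep.congr_law
    (hlaw : ∀ a b, pr μ (fun ω => α ω = a ∧ β ω = b) = pr μ' (fun ω => α' ω = a ∧ β' ω = b))
    (h : Indep μ α β) : Indep μ' α' β' := by
  have := Fintype.ofFinite A
  have := Fintype.ofFinite B
  have law_left (a : A) : pr μ (fun ω => α ω = a) = pr μ' (fun ω => α' ω = a) := by
    rw [← sum_pr_and_eq μ _ β, ← sum_pr_and_eq μ' _ β']
    exact Finset.sum_congr rfl fun b _ => hlaw a b
  have law_right (b : B) : pr μ (fun ω => β ω = b) = pr μ' (fun ω => β' ω = b) := by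
    rw [← sum_pr_and_eq μ _ α, ← sum_pr_and_eq μ' _ α']
    exact Finset.sum_congr rfl fun a _ => by simpa only [and_comm] using hlaw a b
  intro a b
  rw [← hlaw, ← law_left, ← law_right, h a b]

lemma CondIndepOrder.congr_law
    (hlaw : ∀ a b, pr μ (fun ω => α ω = a ∧ β ω = b) = pr μ' (fun ω => α' ω = a ∧ β' ω = b))
    {k : ℕ} (h : CondIndepOrder μ α β k) : CondIndepOrder μ' α' β' k := by
  cases k with
  | zero => exact Indep.congr_law hlaw h
  | succ k =>
    obtain ⟨Ω₁, A₁, B₁, iΩ₁, μ₁, α₀, β₀, αs, βs, hμ₁, hlaw₁, hrest⟩ := h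
    exact ⟨Ω₁, A₁, B₁, iΩ₁, μ₁, α₀, β₀, αs, βs, hμ₁,
      fun a b => (hlaw₁ a b).trans (hlaw a b), hrest⟩

lemma IsGoodMatrix.of_condMutualInfo_eq_zero {p q m n : ℕ} {P : Matrix (Fin p) (Fin q) ℝ}
    {M : Matrix (Fin m) (Fin n) ℝ} {α : Ω → Fin m} {β : Ω → Fin n} {αs : Ω → Fin p}
    {βs : Ω → Fin q} (hP : IsGoodMatrix P) (hμ : ∀ ω, 0 ≤ μ ω)
    (hPs : IsJointMatrixOf P μ αs βs) (hM : IsJointMatrixOf M μ α β)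
    (hαs : condMutualInfo μ α β αs = 0) (hβs : condMutualInfo μ α β βs = 0) :
    IsGoodMatrix M := by
  obtain ⟨Ω₀, iΩ₀, μ₀, α₀, β₀, k, hμ₀, hP₀, hk⟩ := hP
  have hprob : IsProb μ := ⟨hμ, by rw [← hPs.sum_eq, hP₀.sum_eq, hμ₀.2]⟩
  have hk' : CondIndepOrder μ αs βs k :=
    hk.congr_law fun i j => (hP₀ i j).symm.trans (hPs i j)
  exact ⟨Ω, _, μ, α, β, k + 1, hprob, hM,
    Ω, _, _, _, μ, α, β, αs, βs, hprob, fun _ _ => rfl, hαs, hβs, hk'⟩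

end CondIndep

section BlockDist

variable {I J A B : Type}

/-- The law of a random block label `(i, j)` together with a random position `(a, b)`, in which the
quadruple `(i, j, a, b)` has weight `N i j a b`. -/
def blockDist (N : I → J → Matrix A B ℝ) : I × J × A × B → ℝ :=
  fun (i, j, a, b) => N i j a b

section Slices

variable [Fintype I] [Fintype J] [Fintype A] [Fintype B] (N : I → J → Matrix A B ℝ)

lemma sliceMatrix_blockDist_row (i : I) :
    sliceMatrix (blockDist N) (fun ω => ω.2.2.1) (fun ω => ω.2.2.2) (fun ω => ω.1) i =
      ∑ j, N i j := by
  ext a b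
  simp [sliceMatrix, pr, blockDist, Fintype.sum_prod_type, ite_and, Matrix.sum_apply]

lemma sliceMatrix_blockDist_col (j : J) :
    sliceMatrix (blockDist N) (fun ω => ω.2.2.1) (fun ω => ω.2.2.2) (fun ω => ω.2.1) j =
      ∑ i, N i j := by
  ext a b
  simp [sliceMatrix, pr, blockDist, Fintype.sum_prod_type, ite_and, Matrix.sum_apply]

end Slices

variable {p q m n : ℕ} (N : Fin p → Fin q → Matrix (Fin m) (Fin n) ℝ)

lemma isJointMatrixOf_blockDist_label :
    IsJointMatrixOf (Matrix.of fun i j => ∑ a, ∑ b, N i j a b) (blockDist N)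
      (fun ω => ω.1) (fun ω => ω.2.1) := by
  intro i j
  simp [pr, blockDist, Fintype.sum_prod_type, ite_and]

lemma isJointMatrixOf_blockDist_position :
    IsJointMatrixOf (∑ i, ∑ j, N i j) (blockDist N)
      (fun ω => ω.2.2.1) (fun ω => ω.2.2.2) := by
  intro a b
  simp [pr, blockDist, Fintype.sum_prod_type, ite_and, Matrix.sum_apply]

end BlockDist

/-- If the matrices `N i j` have nonnegative entries, every row sum
`Σ_j N i j` and column sum `Σ_i N i j` has rank `1`, and the matrix of total sums
`p i j = S(N i j)` is a good joint probability matrix, then `Σ_{i,j} N i j` is a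
good joint probability matrix. -/
theorem isGoodMatrix_sum_of_blocks {p q m n : ℕ}
    (N : Fin p → Fin q → Matrix (Fin m) (Fin n) ℝ)
    (hnn : ∀ i j a b, 0 ≤ N i j a b)
    (hrow : ∀ i, (∑ j, N i j).rank = 1)
    (hcol : ∀ j, (∑ i, N i j).rank = 1)
    (hP : IsGoodMatrix (Matrix.of fun i j => ∑ a, ∑ b, N i j a b)) :
    IsGoodMatrix (∑ i, ∑ j, N i j) := by
  have hμ : ∀ ω, 0 ≤ blockDist N ω := fun _ => hnn _ _ _ _
  refine hP.of_condMutualInfo_eq_zero hμ (isJointMatrixOf_blockDist_label N)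
    (isJointMatrixOf_blockDist_position N)
    (condMutualInfo_eq_zero_of_rank_le_one hμ fun i => ?_)
    (condMutualInfo_eq_zero_of_rank_le_one hμ fun j => ?_)
  · rw [sliceMatrix_blockDist_row, hrow i]
  · rw [sliceMatrix_blockDist_col, hcol j]
end

section
/- Every nonzero r-matrix M can be written as a finite sum of r-matrices of rank 1, each having the same support as M. -/
open scoped BigOperators Classical

/-!
Split `M` into its nonzero columns, `M = ∑ q ∈ J, M_q e_qᵀ`. The vectors `e_q` do not have full
support on `J`, so replace them by `v_q = e_q + ε 1_J`. This adds `ε S 1_Jᵀ`, where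
`S = ∑ q ∈ J, M_q`, and since `∑ q ∈ J, v_q = (1 + ε |J|) 1_J` the excess is cancelled by
subtracting `c S` from every `M_q`, with `c = ε / (1 + ε |J|)`. For small `ε` the positive
entries of `M_q` stay positive in `M_q - c S`, and the zero entries stay zero: as the support of `M`
is a rectangle, they lie in zero rows of `M`.
-/

section RMatrix

open Function Matrix

section Rank

variable {ι κ R : Type*}

lemma support_uncurry_vecMulVec [MulZeroClass R] [NoZeroDivisors R] (w : ι → R) (v : κ → R) :
    support (uncurry (vecMulVec w v)) = support w ×ˢ support v := by
  ext ⟨i, j⟩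
  exact mul_ne_zero_iff

lemma rank_ne_zero_of_ne_zero [CommRing R] [IsDomain R] [Fintype κ]
    {M : Matrix ι κ R} (hM : M ≠ 0) : M.rank ≠ 0 := by
  contrapose! hM
  rw [rank, Submodule.finrank_eq_zero, LinearMap.range_eq_bot] at hM
  ext i j
  simpa using congrFun (LinearMap.congr_fun hM (Pi.single j 1)) i

lemma rank_vecMulVec_eq_one [CommRing R] [IsDomain R] [Fintype κ]
    {w : ι → R} {v : κ → R} (hw : w ≠ 0) (hv : v ≠ 0) : (vecMulVec w v).rank = 1 := by
  have ne_zero : vecMulVec w v ≠ 0 := by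
    obtain ⟨i, hi⟩ := ne_iff.mp hw
    obtain ⟨j, hj⟩ := ne_iff.mp hv
    exact fun h => mul_ne_zero hi hj (congrFun₂ h i j)
  exact le_antisymm (rank_vecMulVec_le w v)
    (Nat.one_le_iff_ne_zero.mpr (rank_ne_zero_of_ne_zero ne_zero))

end Rank

section Perturbation

variable {ι κ R : Type*} [CommRing R]

/-- The vector `e_q + ε 1_J`: the standard basis vector at `q`, perturbed so that its support
becomes all of `J`. -/
noncomputable def perturbedBasisVec [DecidableEq κ] (J : Finset κ) (ε : R) (q : κ) : κ → R :=
  Pi.single q 1 + (J : Set κ).indicator fun _ => ε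

/-- The `q`-th column of `M` minus `c` times the sum of the columns indexed by `J`; it compensates
for the perturbation in `perturbedBasisVec`. -/
def perturbedCol (M : Matrix ι κ R) (J : Finset κ) (c : R) (q : κ) : ι → R :=
  fun i => M i q - c * ∑ k ∈ J, M i k

lemma perturbedCol_eq_zero {M : Matrix ι κ R} {i : ι} (hi : M.row i = 0) (J : Finset κ) (c : R)
    (q : κ) : perturbedCol M J c q i = 0 := by
  have apply_eq_zero : ∀ k, M i k = 0 := congrFun hi
  simp [perturbedCol, apply_eq_zero]

lemma sum_perturbedCol (M : Matrix ι κ R) (J : Finset κ) (c : R) (i : ι) :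
    ∑ q ∈ J, perturbedCol M J c q i = (1 - c * J.card) * ∑ k ∈ J, M i k := by
  simp only [perturbedCol, Finset.sum_sub_distrib, Finset.sum_const, nsmul_eq_mul]
  ring

lemma sum_vecMulVec_perturbed [DecidableEq κ] {M : Matrix ι κ R} {J : Finset κ} {c ε : R}
    (hJ : ∀ j ∉ J, M.col j = 0) (hc : c * (1 + ε * J.card) = ε) :
    ∑ q ∈ J, vecMulVec (perturbedCol M J c q) (perturbedBasisVec J ε q) = M := by
  ext i j
  rw [Matrix.sum_apply]
  by_cases hj : j ∈ J
  · calc ∑ q ∈ J, perturbedCol M J c q i * perturbedBasisVec J ε q j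
        = perturbedCol M J c j i + ε * ∑ q ∈ J, perturbedCol M J c q i := by
          simp [perturbedBasisVec, hj, mul_add, Finset.sum_add_distrib, Pi.single_apply,
            ← Finset.sum_mul, mul_comm ε]
      _ = M i j + (ε - c * (1 + ε * J.card)) * ∑ k ∈ J, M i k := by
          rw [sum_perturbedCol, perturbedCol]
          ring
      _ = M i j := by rw [hc, sub_self, zero_mul, add_zero]
  · have vec_eq_zero : ∀ q ∈ J, perturbedBasisVec J ε q j = 0 := fun q hq => by
      simp [perturbedBasisVec, hj, ne_of_mem_of_not_mem hq hj]
    calc ∑ q ∈ J, perturbedCol M J c q i * perturbedBasisVec J ε q j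
        = 0 := Finset.sum_eq_zero fun q hq => by rw [vec_eq_zero q hq, mul_zero]
      _ = M i j := (congrFun (hJ j hj) i).symm

section Order

variable [PartialOrder R] [IsOrderedRing R]

lemma perturbedBasisVec_nonneg [DecidableEq κ] (J : Finset κ) {ε : R} (hε : 0 ≤ ε) (q : κ) :
    0 ≤ perturbedBasisVec J ε q :=
  add_nonneg (Pi.single_nonneg.mpr zero_le_one) (Set.indicator_nonneg fun _ _ => hε)

lemma support_perturbedBasisVec [DecidableEq κ] {J : Finset κ} {ε : R} {q : κ}
    (hε : 0 < ε) (hq : q ∈ J) :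
    support (perturbedBasisVec J ε q) = J := by
  ext j
  by_cases hj : j ∈ J
  · have single_nonneg : (0 : κ → R) ≤ Pi.single q 1 := Pi.single_nonneg.mpr zero_le_one
    have pos : 0 < perturbedBasisVec J ε q j :=
      add_pos_of_nonneg_of_pos (single_nonneg j) (by simpa [hj])
    simp [hj, pos.ne']
  · simp [perturbedBasisVec, hj, ne_of_mem_of_not_mem hq hj]

end Order

end Perturbation

section Rectangular

variable {ι κ R : Type*} [Zero R] [PartialOrder R]

/-- The notion of r-matrix for arbitrary index types and coefficients: entries are nonnegative and
the support, taken after uncurrying `M` to a function of positions, is a rectangle. -/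
def IsNonnegRectangular (M : Matrix ι κ R) : Prop :=
  (∀ i j, 0 ≤ M i j) ∧ ∃ (A : Set ι) (B : Set κ), support (uncurry M) = A ×ˢ B

namespace IsNonnegRectangular

variable {M : Matrix ι κ R}

lemma apply_pos_of_ne_zero (hM : IsNonnegRectangular M) {i : ι} {j : κ} (h : M i j ≠ 0) :
    0 < M i j :=
  (hM.1 i j).lt_of_ne' h

lemma apply_ne_zero (hM : IsNonnegRectangular M) {i i' : ι} {j j' : κ}
    (hij : M i j ≠ 0) (hij' : M i' j' ≠ 0) : M i j' ≠ 0 := by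
  obtain ⟨-, A, B, hAB⟩ := hM
  have mem_iff : ∀ i j, M i j ≠ 0 ↔ i ∈ A ∧ j ∈ B := fun i j => Set.ext_iff.mp hAB (i, j)
  exact (mem_iff i j').mpr ⟨((mem_iff i j).mp hij).1, ((mem_iff i' j').mp hij').2⟩

lemma support_eq_prod (hM : IsNonnegRectangular M) {q : κ} (hq : M.col q ≠ 0) :
    support (uncurry M) = support (M.col q) ×ˢ {j | M.col j ≠ 0} := by
  obtain ⟨i₀, hi₀⟩ := ne_iff.mp hq
  ext ⟨i, j⟩
  constructor
  · exact fun hij => ⟨hM.apply_ne_zero hij hi₀, ne_iff.mpr ⟨i, hij⟩⟩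
  · rintro ⟨hiq, hj⟩
    obtain ⟨i', hi'⟩ := ne_iff.mp hj
    exact hM.apply_ne_zero hiq hi'

lemma row_eq_zero (hM : IsNonnegRectangular M) {i : ι} {q : κ}
    (hq : M.col q ≠ 0) (hiq : M i q = 0) : M.row i = 0 := by
  obtain ⟨i₀, hi₀⟩ := ne_iff.mp hq
  by_contra hi
  obtain ⟨k, hik⟩ := ne_iff.mp hi
  exact hM.apply_ne_zero hik hi₀ hiq

end IsNonnegRectangular

end Rectangular

section Decomposition

variable {ι κ K : Type*} [Field K] [LinearOrder K] [IsStrictOrderedRing K]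

lemma exists_pos_forall_mul_lt [Finite ι] (a : ι → K) {b : ι → K} (hb : ∀ i, 0 < b i) :
    ∃ ε > 0, ∀ i, ε * a i < b i := by
  choose δ δ_pos hδ using fun i => exists_pos_mul_lt (hb i) |a i|
  obtain ⟨⟨ε, ε_pos⟩, hε⟩ := Finite.exists_ge fun i => (⟨δ i, δ_pos i⟩ : Set.Ioi (0 : K))
  refine ⟨ε, ε_pos, fun i => ?_⟩
  have ε_le : ε ≤ δ i := hε i
  calc ε * a i ≤ ε * |a i| := by gcongr; exacts [ε_pos.le, le_abs_self _]
    _ ≤ δ i * |a i| := by gcongr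
    _ < b i := by rw [mul_comm]; exact hδ i

namespace IsNonnegRectangular

variable {M : Matrix ι κ K}

lemma exists_forall_perturbedCol_pos [Finite ι] (hM : IsNonnegRectangular M) (J : Finset κ) :
    ∃ c ε : K, 0 < ε ∧ c * (1 + ε * J.card) = ε ∧
      ∀ q ∈ J, ∀ i, M i q ≠ 0 → 0 < perturbedCol M J c q i := by
  obtain ⟨ε, ε_pos, hε⟩ := exists_pos_forall_mul_lt
    (ι := {p : ι × J // M p.1 p.2 ≠ 0}) (fun p => ∑ k ∈ J, M p.1.1 k)
    (fun p => hM.apply_pos_of_ne_zero p.2)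
  have denom_ge_one : 1 ≤ 1 + ε * J.card := le_add_of_nonneg_right (by positivity)
  refine ⟨ε / (1 + ε * J.card), ε, ε_pos, div_mul_cancel₀ _ (by positivity), fun q hq i hiq => ?_⟩
  refine sub_pos.mpr ?_
  calc ε / (1 + ε * J.card) * ∑ k ∈ J, M i k
      ≤ ε * ∑ k ∈ J, M i k := by
        gcongr
        exacts [Finset.sum_nonneg fun k _ => hM.1 i k, div_le_self ε_pos.le denom_ge_one]
    _ < M i q := hε ⟨(i, ⟨q, hq⟩), hiq⟩

lemma exists_eq_sum_vecMulVec [Finite ι] [Finite κ] (hM : IsNonnegRectangular M) :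
    ∃ (J : Finset κ) (w : κ → ι → K) (v : κ → κ → K),
      M = ∑ q ∈ J, vecMulVec (w q) (v q) ∧
      ∀ q ∈ J, 0 ≤ w q ∧ 0 ≤ v q ∧ w q ≠ 0 ∧ v q ≠ 0 ∧
        support (w q) ×ˢ support (v q) = support (uncurry M) := by
  have := Fintype.ofFinite κ
  let J : Finset κ := {q | M.col q ≠ 0}
  have mem_J : ∀ {q}, q ∈ J ↔ M.col q ≠ 0 := by simp [J]
  obtain ⟨c, ε, ε_pos, hc, col_pos⟩ := hM.exists_forall_perturbedCol_pos J
  refine ⟨J, perturbedCol M J c, perturbedBasisVec J ε,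
    (sum_vecMulVec_perturbed (fun j hj => by simpa [mem_J] using hj) hc).symm, fun q hq => ?_⟩
  have hMq : M.col q ≠ 0 := mem_J.mp hq
  have col_eq_zero : ∀ i, M i q = 0 → perturbedCol M J c q i = 0 := fun i hiq =>
    perturbedCol_eq_zero (hM.row_eq_zero hMq hiq) J c q
  have support_w : support (perturbedCol M J c q) = support (M.col q) := by
    ext i
    by_cases hiq : M i q = 0
    · simp [hiq, col_eq_zero i hiq]
    · simp [hiq, (col_pos q hq i hiq).ne']
  have support_v : support (perturbedBasisVec J ε q) = J := support_perturbedBasisVec ε_pos hq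
  refine ⟨fun i => ?_, perturbedBasisVec_nonneg J ε_pos.le q, ?_, ?_, ?_⟩
  · by_cases hiq : M i q = 0
    · exact (col_eq_zero i hiq).ge
    · exact (col_pos q hq i hiq).le
  · rwa [← support_nonempty_iff, support_w, support_nonempty_iff]
  · rw [← support_nonempty_iff, support_v]
    exact ⟨q, hq⟩
  · rw [support_w, support_v, hM.support_eq_prod hMq]
    simp [J]

end IsNonnegRectangular

theorem rMatrix_eq_sum_rank_one_general [Finite ι] [Fintype κ] {M : Matrix ι κ K}
    (hM : IsNonnegRectangular M) :
    ∃ (l : ℕ) (Ms : Fin l → Matrix ι κ K),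
      M = ∑ i, Ms i ∧
      ∀ i, IsNonnegRectangular (Ms i) ∧ (Ms i).rank = 1 ∧
        support (uncurry (Ms i)) = support (uncurry M) := by
  obtain ⟨J, w, v, hsum, hwv⟩ := hM.exists_eq_sum_vecMulVec
  let e : Fin J.card ≃ J := J.equivFin.symm
  refine ⟨J.card, fun k => vecMulVec (w (e k)) (v (e k)), ?_, fun k => ?_⟩
  · rw [e.sum_comp fun q : J => vecMulVec (w q) (v q),
      J.sum_coe_sort fun q => vecMulVec (w q) (v q)]
    exact hsum
  · obtain ⟨w_nonneg, v_nonneg, w_ne_zero, v_ne_zero, hsupp⟩ := hwv (e k) (e k).2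
    rw [support_uncurry_vecMulVec]
    exact ⟨⟨fun i j => mul_nonneg (w_nonneg i) (v_nonneg j), _, _, support_uncurry_vecMulVec _ _⟩,
      rank_vecMulVec_eq_one w_ne_zero v_ne_zero, hsupp⟩

end Decomposition

end RMatrix

/-- Every nonzero r-matrix `M` is a finite sum of r-matrices of
rank `1`, each having the same support as `M`. -/
theorem rMatrix_eq_sum_rank_one {m n : ℕ} (M : Matrix (Fin m) (Fin n) ℝ)
    (hM : IsRMatrix M) (hne : M ≠ 0) :
    ∃ (l : ℕ) (Ms : Fin l → Matrix (Fin m) (Fin n) ℝ),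
      M = ∑ i, Ms i ∧
      ∀ i, IsRMatrix (Ms i) ∧ (Ms i).rank = 1 ∧ msupport (Ms i) = msupport M :=
  rMatrix_eq_sum_rank_one_general hM
end

section
/- Every matrix with nonnegative real entries that has at least one nonzero entry and is not a block matrix admits an r-decomposition. -/
open scoped BigOperators Classical

/-!
Each row and each column of `M` supports a rectangle inside the support of `M`, and these rectangles
cover it. If `M` is not a block matrix, any two nonempty ones are joined by a sequence of rows and
columns whose consecutive rectangles meet, because otherwise the rows and columns reachable from one
of them would form a diagonal block. Hence a single such sequence passes through all of them.
Splitting every entry of `M` evenly among the terms of the sequence that contain its position gives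
the decomposition; repetitions in the sequence do no harm.
-/

section Chains

open Relation

variable {α : Type*} {r : α → α → Prop}

theorem exists_isChain_cons_superset_of_reflTransGen {a b : α} {L : List α}
    (hab : ReflTransGen r a b) (hL : (b :: L).IsChain r) :
    ∃ L', (a :: L').IsChain r ∧ b :: L ⊆ a :: L' := by
  induction hab using ReflTransGen.head_induction_on with
  | refl => exact ⟨L, hL, List.Subset.refl _⟩
  | @head a c hac _ ih =>
    obtain ⟨L', hL', hsub⟩ := ih
    exact ⟨c :: L', hL'.cons_cons hac, List.subset_cons_of_subset a hsub⟩

theorem exists_isChain_cons_superset_of_isChain_reflTransGen {a : α} {T : List α}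
    (hT : (a :: T).IsChain (ReflTransGen r)) :
    ∃ L, (a :: L).IsChain r ∧ T ⊆ a :: L := by
  induction T generalizing a with
  | nil => exact ⟨[], List.isChain_singleton a, List.nil_subset _⟩
  | cons b T ih =>
    obtain ⟨hab, hbT⟩ := List.isChain_cons_cons.1 hT
    obtain ⟨L, hL, hTL⟩ := ih hbT
    obtain ⟨L', hL', hLL'⟩ := exists_isChain_cons_superset_of_reflTransGen hab hL
    exact ⟨L', hL', List.Subset.trans (List.cons_subset.2 ⟨List.mem_cons_self, hTL⟩) hLL'⟩

theorem exists_isChain_forall_mem_of_reflTransGen {T : Set α} (hfin : T.Finite)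
    (hT : ∀ a ∈ T, ∀ b ∈ T, ReflTransGen r a b) :
    ∃ L : List α, L.IsChain r ∧ ∀ a ∈ T, a ∈ L := by
  rcases T.eq_empty_or_nonempty with rfl | ⟨a, ha⟩
  · exact ⟨[], List.isChain_nil, by simp⟩
  · have mem_of_mem_list : ∀ x ∈ a :: hfin.toFinset.toList, x ∈ T := by simp [ha]
    have hpair : (a :: hfin.toFinset.toList).Pairwise (ReflTransGen r) :=
      List.pairwise_of_forall_mem_list fun x hx y hy =>
        hT x (mem_of_mem_list x hx) y (mem_of_mem_list y hy)
    obtain ⟨L, hL, hTL⟩ := exists_isChain_cons_superset_of_isChain_reflTransGen hpair.isChain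
    exact ⟨a :: L, hL, fun x hx => hTL (by simpa using hx)⟩

end Chains

theorem exists_nonneg_sum_eq_of_iUnion_eq_support {α ι 𝕜 : Type*} [Fintype ι] [Semifield 𝕜]
    [LinearOrder 𝕜] [IsStrictOrderedRing 𝕜] {f : α → 𝕜} (hf : 0 ≤ f) {S : ι → Set α}
    (hS : ⋃ k, S k = Function.support f) :
    ∃ g : ι → α → 𝕜, f = ∑ k, g k ∧ (∀ k, 0 ≤ g k) ∧ ∀ k, Function.support (g k) = S k := by
  let coverCount (a : α) : ℕ := Finset.card {k | a ∈ S k}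
  have coverCount_ne_zero {k : ι} {a : α} (ha : a ∈ S k) : (coverCount a : 𝕜) ≠ 0 :=
    Nat.cast_ne_zero.2 (Finset.card_ne_zero_of_mem ((Finset.mem_filter_univ k).2 ha))
  have apply_ne_zero {k : ι} {a : α} (ha : a ∈ S k) : f a ≠ 0 :=
    hS.subset (Set.mem_iUnion_of_mem k ha)
  refine ⟨fun k => (S k).indicator fun a => f a / coverCount a, ?_, fun k => ?_, fun k => ?_⟩
  · ext a
    have sum_eq : ∑ k, (S k).indicator (fun a => f a / coverCount a) a =
        coverCount a * (f a / coverCount a) := by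
      simp only [Set.indicator_apply, ← Finset.sum_filter, Finset.sum_const, nsmul_eq_mul,
        coverCount]
    rw [Finset.sum_apply, sum_eq]
    by_cases ha : f a = 0
    · simp [ha]
    · obtain ⟨k, hk⟩ := Set.mem_iUnion.1 (hS.superset ha)
      exact (mul_div_cancel₀ _ (coverCount_ne_zero hk)).symm
  · exact Set.indicator_nonneg fun a _ => div_nonneg (hf a) (Nat.cast_nonneg _)
  · ext a
    simp only [Function.mem_support, Set.indicator_apply_ne_zero, Set.mem_inter_iff]
    exact and_iff_left_of_imp fun ha => div_ne_zero (apply_ne_zero ha) (coverCount_ne_zero ha)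

section RDecomposition

variable {m n : ℕ} {M : Matrix (Fin m) (Fin n) ℝ}

theorem exists_isRDecomposition_of_iUnion_eq_msupport {l : ℕ} {S : Fin l → Set (Fin m × Fin n)}
    (hnn : ∀ i j, 0 ≤ M i j) (hS : ⋃ k, S k = msupport M)
    (hrect : ∀ k, ∃ A B, S k = A ×ˢ B)
    (hmeet : ∀ (k : ℕ) (h : k + 1 < l), (S ⟨k, Nat.lt_of_succ_lt h⟩ ∩ S ⟨k + 1, h⟩).Nonempty) :
    ∃ Ms : Fin l → Matrix (Fin m) (Fin n) ℝ, IsRDecomposition M l Ms := by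
  obtain ⟨g, hsum, hg, hsupp⟩ := exists_nonneg_sum_eq_of_iUnion_eq_support
    (f := fun p : Fin m × Fin n => M p.1 p.2) (fun p => hnn p.1 p.2) hS
  let Ms (k : Fin l) : Matrix (Fin m) (Fin n) ℝ := Matrix.of fun i j => g k (i, j)
  have msupport_eq (k : Fin l) : msupport (Ms k) = S k := hsupp k
  refine ⟨Ms, ?_, fun k => ⟨fun i j => hg k (i, j), ?_⟩, fun k h => ?_⟩
  · ext i j
    simpa [Ms, Matrix.sum_apply] using congrFun hsum (i, j)
  · simpa only [msupport_eq] using hrect k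
  · simpa only [msupport_eq] using hmeet k h

/-- The part of the support of `M` lying in a given row (`Sum.inl i`) or column (`Sum.inr j`),
as the rectangle it spans. These rectangles carry the summands of the decomposition. -/
def lineSupport (M : Matrix (Fin m) (Fin n) ℝ) : Fin m ⊕ Fin n → Set (Fin m × Fin n)
  | .inl i => {i} ×ˢ {j | M i j ≠ 0}
  | .inr j => {i | M i j ≠ 0} ×ˢ {j}

/-- Two lines of `M` meet if they have a common nonzero entry. For a row and a column this is
adjacency in the bipartite graph of nonzero entries; two distinct parallel lines never meet. -/
def LinesMeet (M : Matrix (Fin m) (Fin n) ℝ) (u v : Fin m ⊕ Fin n) : Prop :=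
  (lineSupport M u ∩ lineSupport M v).Nonempty

theorem exists_lineSupport_eq_prod (u : Fin m ⊕ Fin n) : ∃ A B, lineSupport M u = A ×ˢ B := by
  cases u <;> exact ⟨_, _, rfl⟩

theorem lineSupport_subset_msupport (u : Fin m ⊕ Fin n) : lineSupport M u ⊆ msupport M := by
  rintro ⟨i, j⟩ hp
  cases u with
  | inl i => obtain ⟨rfl, hM⟩ := hp; exact hM
  | inr j => obtain ⟨hM, rfl⟩ := hp; exact hM

theorem mem_lineSupport_row {p : Fin m × Fin n} (hp : p ∈ msupport M) :
    p ∈ lineSupport M (.inl p.1) :=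
  ⟨rfl, hp⟩

theorem mem_lineSupport_col {p : Fin m × Fin n} (hp : p ∈ msupport M) :
    p ∈ lineSupport M (.inr p.2) :=
  ⟨hp, rfl⟩

theorem isBlockMatrix_of_mem_iff_mem {I : Finset (Fin m)} {J : Finset (Fin n)}
    (hIJ : ∀ p ∈ msupport M, p.1 ∈ I ↔ p.2 ∈ J) {p q : Fin m × Fin n}
    (hp : p ∈ msupport M) (hq : q ∈ msupport M) (hpI : p.1 ∈ I) (hqI : q.1 ∉ I) :
    IsBlockMatrix M := by
  have hpJ : p.2 ∈ J := (hIJ p hp).1 hpI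
  have hqI' : q.1 ∈ Iᶜ := Finset.mem_compl.2 hqI
  have hqJ' : q.2 ∈ Jᶜ := Finset.mem_compl.2 fun hqJ => hqI ((hIJ q hq).2 hqJ)
  refine ⟨I, J, ⟨_, hpI⟩, ⟨_, hqI'⟩, ⟨_, hpJ⟩, ⟨_, hqJ'⟩, ⟨_, hpI, _, hpJ, hp⟩,
    ⟨_, hqI', _, hqJ', hq⟩, fun i j hij => ?_⟩
  by_contra hM
  have hiff : i ∈ I ↔ j ∈ J := hIJ (i, j) hM
  simp only [Finset.mem_compl] at hij
  tauto

theorem reflTransGen_linesMeet_of_not_isBlockMatrix (hnb : ¬ IsBlockMatrix M)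
    {u v : Fin m ⊕ Fin n} (hu : (lineSupport M u).Nonempty) (hv : (lineSupport M v).Nonempty) :
    Relation.ReflTransGen (LinesMeet M) u v := by
  by_contra huv
  let Reachable (w : Fin m ⊕ Fin n) : Prop := Relation.ReflTransGen (LinesMeet M) u w
  have reachable_of_mem {w w' : Fin m ⊕ Fin n} {p : Fin m × Fin n} (hw : Reachable w)
      (hp : p ∈ lineSupport M w) (hp' : p ∈ lineSupport M w') : Reachable w' :=
    hw.tail ⟨p, hp, hp'⟩
  obtain ⟨p, hpu⟩ := hu
  obtain ⟨q, hqv⟩ := hv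
  have hp := lineSupport_subset_msupport u hpu
  have hq := lineSupport_subset_msupport v hqv
  refine hnb (isBlockMatrix_of_mem_iff_mem (I := {i | Reachable (.inl i)})
    (J := {j | Reachable (.inr j)}) (fun s hs => ?_) hp hq ?_ ?_)
  · simp only [Finset.mem_filter_univ]
    exact ⟨fun h => reachable_of_mem h (mem_lineSupport_row hs) (mem_lineSupport_col hs),
      fun h => reachable_of_mem h (mem_lineSupport_col hs) (mem_lineSupport_row hs)⟩
  · rw [Finset.mem_filter_univ]
    exact reachable_of_mem .refl hpu (mem_lineSupport_row hp)
  · rw [Finset.mem_filter_univ]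
    exact fun h => huv (reachable_of_mem h (mem_lineSupport_row hq) hqv)

end RDecomposition

/-- Every matrix with nonnegative real entries that has at least one
nonzero entry and is not a block matrix admits an r-decomposition. -/
theorem exists_rDecomposition_of_not_block {m n : ℕ} (M : Matrix (Fin m) (Fin n) ℝ)
    (hnn : ∀ i j, 0 ≤ M i j) (hne : M ≠ 0) (hnb : ¬ IsBlockMatrix M) :
    ∃ (l : ℕ) (Ms : Fin l → Matrix (Fin m) (Fin n) ℝ), IsRDecomposition M l Ms := by
  obtain ⟨L, hL, hcover⟩ := exists_isChain_forall_mem_of_reflTransGen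
    (Set.toFinite {u | (lineSupport M u).Nonempty})
    fun u hu v hv => reflTransGen_linesMeet_of_not_isBlockMatrix hnb hu hv
  have iUnion_eq : ⋃ k : Fin L.length, lineSupport M L[k] = msupport M := by
    refine (Set.iUnion_subset fun k => lineSupport_subset_msupport _).antisymm fun p hp => ?_
    have hp_row := mem_lineSupport_row hp
    obtain ⟨k, hk, hLk⟩ := List.getElem_of_mem (hcover _ ⟨p, hp_row⟩)
    exact Set.mem_iUnion.2 ⟨⟨k, hk⟩, hLk ▸ hp_row⟩
  exact ⟨L.length, exists_isRDecomposition_of_iUnion_eq_msupport hnn iUnion_eq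
    (fun k => exists_lineSupport_eq_prod _) hL.getElem⟩
end
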